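/- Let f_τ, f_σ and f_{τ,k}, f_{σ,k} (k ∈ ℕ) be operator monotone functions from (0,∞) to (0,∞) with value 1 at 1, and let f_σ be strictly increasing. Assume f_{τ,k}(t) → f_τ(t) and f_{σ,k}(t) → f_σ(t) as k → ∞ for every t > 0. Fix t > 0 and δ ∈ (0,1). Suppose for each k that x_k ∈ [δ, 1/δ] satisfies f_{σ,k}(1/x_k)·f_{τ,k}(f_{σ,k}(t/x_k)/f_{σ,k}(1/x_k)) = 1, and that x > 0 is the unique positive solution of f_σ(1/x)·f_τ(f_σ(t/x)/f_σ(1/x)) = 1. Then x_k → x as k → ∞. -/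

import Mathlib

/-!
A positive operator monotone function `f` on `(0,∞)` is nondecreasing, and `u ↦ f u / u` is
nonincreasing (`OperatorMonotoneOnPos.mul_le_mul`). The second fact comes from comparing two
`2 × 2` matrices `A ≤ B`, where `A` has eigenvalues `b` and a small `ε`, with the `b`-eigenvector
having squared first coordinate `c < a / b`, and `B = diag(a, M)` with `M` large: the upper left
entries of `f(A) ≤ f(B)` give `c * f b ≤ f a`, and `c → a / b`.

Hence `f (s * u) ≤ s * f u` for `s ≥ 1`, a bound uniform over all such `f`. It upgrades pointwise
convergence `f_k → f` to continuous convergence `f_k (u_k) → f u` whenever `u_k → u > 0`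
(`tendsto_apply_of_opMono`). By compactness of `[δ, δ⁻¹]`, every subsequence of `x_k` has a further
subsequence converging to some `y > 0`; passing to the limit in the equation, `y` solves the limit
equation, so `y = x` by uniqueness.
-/

open scoped ComplexOrder

/-- `f` is operator monotone on `(0,∞)`: for all positive definite Hermitian complex
matrices (of any size), `A ≤ B` in the Loewner order implies `f(A) ≤ f(B)`, where
`f` is applied via the spectral functional calculus. -/
def OperatorMonotoneOnPos (f : ℝ → ℝ) : Prop :=
  ∀ (n : ℕ) (A B : Matrix (Fin n) (Fin n) ℂ), A.PosDef → B.PosDef →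
    (B - A).PosSemidef → (cfc f B - cfc f A).PosSemidef

/-- If `A` has at most the two eigenvalues `p ≠ q`, then `f(A)` is the affine interpolant of `f`
at `p` and `q`, evaluated at `A`. -/
lemma cfc_eq_affine_of_two_eigenvalues {n : ℕ} (f : ℝ → ℝ) (A : Matrix (Fin n) (Fin n) ℂ)
    (hA : IsSelfAdjoint A) (p q : ℝ) (hpq : p ≠ q)
    (h : (A - algebraMap ℝ _ p) * (A - algebraMap ℝ _ q) = 0) :
    cfc f A = algebraMap ℝ _ (f q - (f p - f q) / (p - q) * q) + ((f p - f q) / (p - q)) • A := by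
  have hspec : ∀ z ∈ spectrum ℝ A, z = p ∨ z = q := by
    intro z hz
    by_contra! hne
    apply hz
    -- `z - A` is invertible: its product with `A - (p + q - z)` is a nonzero scalar.
    have key : (algebraMap ℝ (Matrix (Fin n) (Fin n) ℂ) z - A) *
        (A - algebraMap ℝ _ (p + q - z)) = algebraMap ℝ _ ((z - p) * (z - q)) := by
      have e : (A - algebraMap ℝ _ p) * (A - algebraMap ℝ _ q)
          = A * A - (p + q) • A + (p * q) • 1 := by
        simp only [Algebra.algebraMap_eq_smul_one, sub_mul, mul_sub, smul_mul_assoc,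
          mul_smul_comm, one_mul, mul_one]
        module
      rw [e] at h
      have h2 : A * A = (p + q) • A - (p * q) • 1 := by
        rw [← sub_eq_zero, ← h]; abel
      simp only [Algebra.algebraMap_eq_smul_one, sub_mul, mul_sub, smul_mul_assoc,
          mul_smul_comm, one_mul, mul_one, h2]
      module
    have hu : IsUnit (algebraMap ℝ (Matrix (Fin n) (Fin n) ℂ) ((z - p) * (z - q))) :=
      (IsUnit.mk0 _ (mul_ne_zero (sub_ne_zero.2 hne.1) (sub_ne_zero.2 hne.2))).map _
    rw [← key, Matrix.isUnit_iff_isUnit_det, Matrix.det_mul] at hu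
    rw [spectrum.mem_resolventSet_iff, Matrix.isUnit_iff_isUnit_det]
    exact isUnit_of_mul_isUnit_left hu
  have hpq' : p - q ≠ 0 := sub_ne_zero.2 hpq
  have hc : cfc f A = cfc (fun z => (f q - (f p - f q) / (p - q) * q) +
      (f p - f q) / (p - q) * z) A := by
    apply cfc_congr
    intro z hz
    rcases hspec z hz with rfl | rfl
    · simp only; field_simp; ring
    · simp only; ring
  rw [hc, cfc_const_add _ _ A (by fun_prop) hA, cfc_const_mul _ _ A (by fun_prop)]
  congr 2
  exact cfc_id' ℝ A hA

lemma posSemidef_two (p q r : ℝ) (hp : 0 < p) (h : q ^ 2 ≤ p * r) :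
    (!![(p : ℂ), q; q, r]).PosSemidef := by
  have e : !![(p : ℂ), q; q, r] =
      ((p⁻¹ : ℝ) : ℂ) • Matrix.vecMulVec ![(p : ℂ), q] (star ![(p : ℂ), q]) +
        Matrix.diagonal ![0, ((r - q ^ 2 / p : ℝ) : ℂ)] := by
    have hp' : (p : ℂ) ≠ 0 := by exact_mod_cast hp.ne'
    ext i j
    fin_cases i <;> fin_cases j <;>
      simp [Matrix.vecMulVec_apply, Matrix.smul_apply, -Matrix.cons_vecMulVec, -Matrix.smul_cons,
        -Matrix.smul_of] <;>
      field_simp <;> ring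
  rw [e]
  refine ((Matrix.posSemidef_vecMulVec_self_star _).smul ?_).add (Matrix.PosSemidef.diagonal ?_)
  · exact_mod_cast (inv_pos.2 hp).le
  · have : q ^ 2 / p ≤ r := by rw [div_le_iff₀ hp]; linarith
    intro i
    fin_cases i
    · simp
    · simp only [Fin.mk_one, Pi.zero_apply, Matrix.cons_val_one, Matrix.cons_val_fin_one]
      exact_mod_cast sub_nonneg.2 this

namespace OperatorMonotoneOnPos

lemma le_of_le {f : ℝ → ℝ} (hf : OperatorMonotoneOnPos f) {a b : ℝ} (ha : 0 < a)
    (hab : a ≤ b) : f a ≤ f b := by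
  have hpd : ∀ c : ℝ, 0 < c → (algebraMap ℝ (Matrix (Fin 1) (Fin 1) ℂ) c).PosDef := by
    intro c hc
    rw [Matrix.algebraMap_eq_diagonal]
    refine Matrix.PosDef.diagonal fun i => ?_
    simpa using hc
  have h := hf 1 (algebraMap ℝ _ a) (algebraMap ℝ _ b) (hpd a ha) (hpd b (ha.trans_le hab)) (by
    rw [← map_sub, Matrix.algebraMap_eq_diagonal]
    refine Matrix.PosSemidef.diagonal fun i => ?_
    simp only [Pi.zero_apply, Pi.algebraMap_apply, Complex.coe_algebraMap]
    exact_mod_cast sub_nonneg.2 hab)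
  rw [cfc_algebraMap, cfc_algebraMap, ← map_sub] at h
  have h0 := h.diag_nonneg (i := 0)
  rw [Matrix.algebraMap_matrix_apply] at h0
  simp only [if_true, Complex.coe_algebraMap] at h0
  have h1 : (0 : ℝ) ≤ f b - f a := by exact_mod_cast h0
  linarith

/-- The comparison of `A` (eigenvalues `b`, `ε`) with `diag(a, M)`, read off at the upper left
entry. -/
lemma weight_mul_le {f : ℝ → ℝ} (hf : OperatorMonotoneOnPos f) (hpos : ∀ u, 0 < u → 0 < f u)
    {a b c : ℝ} (ha : 0 < a) (hab : a < b) (hc : 0 < c) (hcb : c * b < a) :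
    c * f b ≤ f a := by
  have hb : 0 < b := ha.trans hab
  have hc1 : c < 1 := by
    by_contra! h
    nlinarith
  obtain ⟨ε, hε⟩ : ∃ ε, ε = (a - c * b) / 2 := ⟨_, rfl⟩
  have hε0 : 0 < ε := by rw [hε]; linarith
  have hεb : ε < b := by rw [hε]; nlinarith
  obtain ⟨s, hs⟩ : ∃ s, s = Real.sqrt (c * (1 - c)) := ⟨_, rfl⟩
  have hs2 : s ^ 2 = c * (1 - c) := by
    rw [hs]; exact Real.sq_sqrt (mul_nonneg hc.le (by linarith))
  obtain ⟨p, hp⟩ : ∃ p, p = a - (ε + (b - ε) * c) := ⟨_, rfl⟩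
  have hp0 : 0 < p := by
    have : 0 < ε * c := mul_pos hε0 hc
    rw [hp]; linarith
  -- The lower right entry of `B` makes the determinant of `B - A` nonnegative, and `M > a`.
  obtain ⟨M, hM⟩ : ∃ M, M = ε + (b - ε) * (1 - c) + ((b - ε) * s) ^ 2 / p + a := ⟨_, rfl⟩
  have hMa : a < M := by
    have h1 : 0 < (b - ε) * (1 - c) := mul_pos (by linarith) (by linarith)
    have h2 : 0 ≤ ((b - ε) * s) ^ 2 / p := by positivity
    linarith
  let A : Matrix (Fin 2) (Fin 2) ℂ :=
    !![((ε + (b - ε) * c : ℝ) : ℂ), (((b - ε) * s : ℝ) : ℂ);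
      (((b - ε) * s : ℝ) : ℂ), ((ε + (b - ε) * (1 - c) : ℝ) : ℂ)]
  let B : Matrix (Fin 2) (Fin 2) ℂ := Matrix.diagonal ![(a : ℂ), (M : ℂ)]
  have hA : A.PosDef := by
    have e : A = Matrix.diagonal (fun _ => (ε : ℂ)) +
        !![(((b - ε) * c : ℝ) : ℂ), (((b - ε) * s : ℝ) : ℂ);
          (((b - ε) * s : ℝ) : ℂ), (((b - ε) * (1 - c) : ℝ) : ℂ)] := by
      ext i j
      fin_cases i <;> fin_cases j <;> simp [A, Matrix.diagonal]
    rw [e]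
    refine (Matrix.PosDef.diagonal fun _ => by exact_mod_cast hε0).add_posSemidef
      (posSemidef_two _ _ _ (mul_pos (by linarith) hc) ?_)
    rw [mul_pow, hs2]
    exact le_of_eq (by ring)
  have hB : B.PosDef := by
    refine Matrix.PosDef.diagonal fun i => ?_
    fin_cases i
    · simpa using ha
    · simpa using ha.trans hMa
  have hBA : (B - A).PosSemidef := by
    have e : B - A = !![(p : ℂ), ((-((b - ε) * s) : ℝ) : ℂ);
        ((-((b - ε) * s) : ℝ) : ℂ), ((((b - ε) * s) ^ 2 / p + a : ℝ) : ℂ)] := by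
      ext i j
      fin_cases i <;> fin_cases j <;> simp [A, B, Matrix.diagonal, hp, hM]
      ring
    rw [e]
    refine posSemidef_two _ _ _ hp0 ?_
    rw [neg_sq, mul_add, mul_div_cancel₀ _ hp0.ne']
    have := mul_pos hp0 ha
    linarith
  have h := (hf 2 A B hA hB hBA).diag_nonneg (i := 0)
  have hs2' : (s : ℂ) ^ 2 = c * (1 - c) := by exact_mod_cast hs2
  rw [cfc_eq_affine_of_two_eigenvalues f A hA.isHermitian b ε hεb.ne' (by
      ext i j
      fin_cases i <;> fin_cases j <;>
        simp [A, Matrix.mul_apply, Fin.sum_univ_two, Matrix.algebraMap_matrix_apply] <;>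
        first | ring1 | linear_combination ((b : ℂ) - ε) ^ 2 * hs2'),
    cfc_eq_affine_of_two_eigenvalues f B hB.isHermitian a M hMa.ne (by
      ext i j
      fin_cases i <;> fin_cases j <;>
        simp [B, Matrix.mul_apply, Fin.sum_univ_two, Matrix.algebraMap_matrix_apply])] at h
  simp only [Matrix.sub_apply, Matrix.add_apply, Matrix.smul_apply, Matrix.algebraMap_matrix_apply,
    if_true, Complex.coe_algebraMap, A, B, Matrix.diagonal_apply_eq, Matrix.cons_val_zero,
    Matrix.of_apply, Matrix.cons_val', Complex.real_smul] at h
  have h' : (0 : ℝ) ≤ ((f M - (f a - f M) / (a - M) * M) + (f a - f M) / (a - M) * a) -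
      ((f ε - (f b - f ε) / (b - ε) * ε) + (f b - f ε) / (b - ε) * (ε + (b - ε) * c)) := by
    exact_mod_cast h
  have e1 : (f M - (f a - f M) / (a - M) * M) + (f a - f M) / (a - M) * a = f a := by
    have : a - M ≠ 0 := by linarith
    field_simp
    ring
  have e2 : (f ε - (f b - f ε) / (b - ε) * ε) + (f b - f ε) / (b - ε) * (ε + (b - ε) * c)
      = c * f b + (1 - c) * f ε := by
    have : b - ε ≠ 0 := by linarith
    field_simp
    ring
  rw [e1, e2] at h'
  have := mul_pos (sub_pos.2 hc1) (hpos ε hε0)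
  linarith

/-- `u ↦ f u / u` is nonincreasing on `(0,∞)`. -/
lemma mul_le_mul {f : ℝ → ℝ} (hf : OperatorMonotoneOnPos f) (hpos : ∀ u, 0 < u → 0 < f u)
    {a b : ℝ} (ha : 0 < a) (hab : a ≤ b) : a * f b ≤ b * f a := by
  rcases hab.eq_or_lt with rfl | hab
  · exact le_rfl
  have hb : 0 < b := ha.trans hab
  have hfb := hpos b hb
  by_contra! h
  -- A weight `c` strictly between `f a / f b` and `a / b` contradicts `weight_mul_le`.
  obtain ⟨c, hc1, hc2⟩ := exists_between (show f a / f b < a / b by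
    rw [div_lt_div_iff₀ hfb hb]; linarith)
  have hc : 0 < c := (div_pos (hpos a ha) hfb).trans hc1
  have := hf.weight_mul_le hpos ha hab hc ((lt_div_iff₀ hb).1 hc2)
  rw [div_lt_iff₀ hfb] at hc1
  linarith

end OperatorMonotoneOnPos

/-- Pointwise convergence of positive operator monotone functions is automatically continuous
convergence. -/
lemma tendsto_apply_of_opMono {f : ℝ → ℝ} {fk : ℕ → ℝ → ℝ}
    (hpos : ∀ k, ∀ u : ℝ, 0 < u → 0 < fk k u) (hmono : ∀ k, OperatorMonotoneOnPos (fk k))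
    {u : ℝ} (hu : 0 < u) (hconv : Filter.Tendsto (fun k => fk k u) Filter.atTop (nhds (f u)))
    {uk : ℕ → ℝ} (huk : Filter.Tendsto uk Filter.atTop (nhds u)) :
    Filter.Tendsto (fun k => fk k (uk k)) Filter.atTop (nhds (f u)) := by
  have hrat : Filter.Tendsto (fun k => uk k / u) Filter.atTop (nhds 1) := by
    simpa [hu.ne'] using huk.div_const u
  have hlo : Filter.Tendsto (fun k => min 1 (uk k / u) * fk k u) Filter.atTop (nhds (f u)) := by
    simpa using ((tendsto_const_nhds (x := (1 : ℝ))).min hrat).mul hconv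
  have hhi : Filter.Tendsto (fun k => max 1 (uk k / u) * fk k u) Filter.atTop (nhds (f u)) := by
    simpa using ((tendsto_const_nhds (x := (1 : ℝ))).max hrat).mul hconv
  have hev : ∀ᶠ k in Filter.atTop, 0 < uk k := huk.eventually (lt_mem_nhds hu)
  refine tendsto_of_tendsto_of_tendsto_of_le_of_le' hlo hhi ?_ ?_
  · filter_upwards [hev] with k hk
    rcases le_total u (uk k) with h | h
    · exact (mul_le_of_le_one_left (hpos k u hu).le (min_le_left _ _)).trans
        ((hmono k).le_of_le hu h)
    · refine (mul_le_mul_of_nonneg_right (min_le_right _ _) (hpos k u hu).le).trans ?_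
      rw [div_mul_eq_mul_div, div_le_iff₀ hu]
      have := (hmono k).mul_le_mul (hpos k) hk h
      linarith
  · filter_upwards [hev] with k hk
    rcases le_total u (uk k) with h | h
    · refine le_trans ?_ (mul_le_mul_of_nonneg_right (le_max_right _ _) (hpos k u hu).le)
      rw [div_mul_eq_mul_div, le_div_iff₀ hu]
      have := (hmono k).mul_le_mul (hpos k) hu h
      linarith
    · exact ((hmono k).le_of_le hk h).trans
        (le_mul_of_one_le_left (hpos k u hu).le (le_max_left _ _))

/-- Convergence of the representing functions of deformed operator means: if
`f_{τ,k} → f_τ` and `f_{σ,k} → f_σ` pointwise on `(0,∞)` (all normalized operator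
monotone, `f_σ` strictly increasing), `x_k ∈ [δ,1/δ]` solve the deformed equations
for `(f_{τ,k}, f_{σ,k})` at `t`, and `x` is the unique positive solution for
`(f_τ, f_σ)` at `t`, then `x_k → x`. -/
theorem deformed_representing_function_converges
    (fτ fσ : ℝ → ℝ) (fτk fσk : ℕ → ℝ → ℝ)
    (hτpos : ∀ x : ℝ, 0 < x → 0 < fτ x) (hσpos : ∀ x : ℝ, 0 < x → 0 < fσ x)
    (hτkpos : ∀ k, ∀ x : ℝ, 0 < x → 0 < fτk k x)
    (hσkpos : ∀ k, ∀ x : ℝ, 0 < x → 0 < fσk k x)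
    (hτopmono : OperatorMonotoneOnPos fτ) (hσopmono : OperatorMonotoneOnPos fσ)
    (hτkopmono : ∀ k, OperatorMonotoneOnPos (fτk k))
    (hσkopmono : ∀ k, OperatorMonotoneOnPos (fσk k))
    (hτ1 : fτ 1 = 1) (hσ1 : fσ 1 = 1) (hτk1 : ∀ k, fτk k 1 = 1) (hσk1 : ∀ k, fσk k 1 = 1)
    (hσsmono : StrictMonoOn fσ (Set.Ioi 0))
    (hτconv : ∀ u : ℝ, 0 < u → Filter.Tendsto (fun k => fτk k u) Filter.atTop (nhds (fτ u)))
    (hσconv : ∀ u : ℝ, 0 < u → Filter.Tendsto (fun k => fσk k u) Filter.atTop (nhds (fσ u)))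
    (t δ : ℝ) (ht : 0 < t) (hδ0 : 0 < δ) (hδ1 : δ < 1)
    (xk : ℕ → ℝ) (hxk : ∀ k, xk k ∈ Set.Icc δ δ⁻¹)
    (hxkeq : ∀ k, fσk k (1 / xk k) * fτk k (fσk k (t / xk k) / fσk k (1 / xk k)) = 1)
    (x : ℝ) (hx : 0 < x)
    (hxeq : fσ (1 / x) * fτ (fσ (t / x) / fσ (1 / x)) = 1)
    (huniq : ∀ y : ℝ, 0 < y → fσ (1 / y) * fτ (fσ (t / y) / fσ (1 / y)) = 1 → y = x) :
    Filter.Tendsto xk Filter.atTop (nhds x) := by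
  refine Filter.tendsto_of_subseq_tendsto fun ns hns => ?_
  obtain ⟨y, hy, φ, hφ, hlim⟩ := isCompact_Icc.tendsto_subseq fun n => hxk (ns n)
  have hm : Filter.Tendsto (fun n => ns (φ n)) Filter.atTop Filter.atTop :=
    hns.comp hφ.tendsto_atTop
  have hy0 : 0 < y := hδ0.trans_le hy.1
  have hlim' : Filter.Tendsto (fun n => xk (ns (φ n))) Filter.atTop (nhds y) := hlim
  have hσlim : ∀ s : ℝ, 0 < s → Filter.Tendsto
      (fun n => fσk (ns (φ n)) (s / xk (ns (φ n)))) Filter.atTop (nhds (fσ (s / y))) :=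
    fun s hs => tendsto_apply_of_opMono (fk := fun n => fσk (ns (φ n)))
      (fun n => hσkpos _) (fun n => hσkopmono _) (div_pos hs hy0)
      ((hσconv _ (div_pos hs hy0)).comp hm) (tendsto_const_nhds.div hlim' hy0.ne')
  have h1 := hσlim 1 one_pos
  have hσ1y := hσpos _ (div_pos one_pos hy0)
  have hq := div_pos (hσpos _ (div_pos ht hy0)) hσ1y
  have hτlim := tendsto_apply_of_opMono (fk := fun n => fτk (ns (φ n)))
    (fun n => hτkpos _) (fun n => hτkopmono _) hq ((hτconv _ hq).comp hm)
    ((hσlim t ht).div h1 hσ1y.ne')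
  have hprod := h1.mul hτlim
  have hyeq := tendsto_nhds_unique
    (hprod.congr fun n => hxkeq (ns (φ n))) tendsto_const_nhds
  refine ⟨φ, ?_⟩
  rw [← huniq y hy0 hyeq]
  exact hlim'
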